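/- arXiv:1705.03300 — 3 statements merged into one kernel-verified Lean document; each statement's English description precedes it below -/
import Mathlib

section
/- Let (A,G,α) be a C*-dynamical system with G discrete and A unital, and let φ : G → Z(A) be a function into the centre of A. Define F_φ : G → CB(A) by F_φ(t)(a) = φ(t)a. Then φ is α-positive definite (i.e. for all n ∈ ℕ and s₁,...,s_n ∈ G the matrix (α_{s_i}(φ(s_i⁻¹s_j)))_{i,j} belongs to M_n(A)⁺) if and only if N(F_φ) is of positive type. -/
noncomputable section

open scoped ComplexOrder
open Matrix
open scoped ENNReal

/-- Positivity of a matrix over a (possibly non-unital) C*-algebra: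
`M` is positive iff it factors as `Nᴴ * N`. -/
def MatPos {R : Type*} [NonUnitalSemiring R] [StarRing R] {ν : Type*} [Fintype ν]
    (M : Matrix ν ν R) : Prop :=
  ∃ N : Matrix ν ν R, M = Nᴴ * N

/-- A linear map between C*-algebras is completely positive if all its matrix
amplifications preserve positivity. -/
def IsCompletelyPositive {R S : Type*} [NonUnitalSemiring R] [StarRing R] [Module ℂ R]
    [NonUnitalSemiring S] [StarRing S] [Module ℂ S] (Φ : R →ₗ[ℂ] S) : Prop :=
  ∀ (n : ℕ) (M : Matrix (Fin n) (Fin n) R), MatPos M → MatPos (M.map Φ)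

variable {H : Type*} [NormedAddCommGroup H] [InnerProductSpace ℂ H] [CompleteSpace H]

/-- The bounded operator on the Hilbert space `H ⊕₂ ⋯ ⊕₂ H` associated to an
operator-valued `n × n` matrix. -/
def matOp {ν : Type*} [Fintype ν] (M : Matrix ν ν (H →L[ℂ] H)) :
    PiLp 2 (fun _ : ν => H) →L[ℂ] PiLp 2 (fun _ : ν => H) :=
  ((PiLp.continuousLinearEquiv 2 ℂ (fun _ : ν => H)).symm :
      (∀ _ : ν, H) →L[ℂ] PiLp 2 (fun _ : ν => H)) ∘L
    (ContinuousLinearMap.pi fun i =>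
      (∑ j, (M i j) ∘L (ContinuousLinearMap.proj j)) ∘L
        ((PiLp.continuousLinearEquiv 2 ℂ (fun _ : ν => H)) :
          PiLp 2 (fun _ : ν => H) →L[ℂ] ∀ _ : ν, H))

variable {H : Type*} [NormedAddCommGroup H] [InnerProductSpace ℂ H] [CompleteSpace H]
variable {X : Type*}

/-- Evaluation at a point, as a continuous linear map `ℓ²(X,H) → H`. -/
def lpEval (x : X) : lp (fun _ : X => H) 2 →L[ℂ] H :=
  LinearMap.mkContinuous
    { toFun := fun f => f x
      map_add' := fun f g => by
        have := lp.coeFn_add f g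
        exact congrFun this x
      map_smul' := fun c f => by
        have := lp.coeFn_smul c f
        exact congrFun this x }
    1 (fun f => by
      simpa using lp.norm_apply_le_norm (by norm_num) f x)

/-- Inclusion of the `x`-th coordinate, as a continuous linear map `H → ℓ²(X,H)`. -/
def lpSingle (x : X) : H →L[ℂ] lp (fun _ : X => H) 2 := by
  classical
  exact LinearMap.mkContinuous
    { toFun := fun ξ => lp.single 2 x ξ
      map_add' := fun ξ η => by
        apply lp.ext
        funext j
        by_cases h : j = x
        · subst h; simp [lp.single_apply_self]
        · simp [lp.single_apply_ne _ _ _ h, lp.coeFn_add]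
      map_smul' := fun c ξ => by simp [lp.single_smul] }
    1 (fun ξ => by
      simpa using (lp.norm_single (p := 2) (by norm_num)
        (fun _ : X => ξ) x).le)

/-- The elementary operator `e_{x,y} ⊗ T` on `ℓ²(X,H)`. -/
def elemOp (x y : X) (T : H →L[ℂ] H) :
    lp (fun _ : X => H) 2 →L[ℂ] lp (fun _ : X => H) 2 :=
  (lpSingle x) ∘L T ∘L (lpEval y)

/-- The operator `T_k` on `ℓ²(X,H)` associated with a finitely supported kernel
`k : X × X → B(H)`; it is (defined to be) `0` if `k` is not finitely supported. -/
def TOp (k : X × X → (H →L[ℂ] H)) :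
    lp (fun _ : X => H) 2 →L[ℂ] lp (fun _ : X => H) 2 :=
  ∑ᶠ (p : X × X), elemOp p.1 p.2 (k p)

variable {G : Type*} [Group G]

/-- The left regular translation `λ_t` on `ℓ²(G,H)`. -/
def lam (t : G) : lp (fun _ : G => H) 2 →L[ℂ] lp (fun _ : G => H) 2 :=
  LinearMap.mkContinuous
    { toFun := fun f =>
        ⟨fun s => f (t⁻¹ * s), by
          apply memℓp_gen
          have hf : Summable fun s => ‖f s‖ ^ (2 : ℝ≥0∞).toReal :=
            (lp.memℓp f).summable (by norm_num)
          exact ((Equiv.mulLeft t⁻¹).summable_iff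
            (f := fun s => ‖f s‖ ^ (2 : ℝ≥0∞).toReal)).2 hf⟩
      map_add' := fun f g => by
        apply lp.ext; funext s
        exact congrFun (lp.coeFn_add f g) (t⁻¹ * s)
      map_smul' := fun c f => by
        apply lp.ext; funext s
        exact congrFun (lp.coeFn_smul c f) (t⁻¹ * s) }
    1 (fun f => by
      rw [one_mul]
      refine lp.norm_le_of_tsum_le (by norm_num) (norm_nonneg f) ?_
      have h1 : ∑' (s : G), ‖f (t⁻¹ * s)‖ ^ (2 : ℝ≥0∞).toReal
          = ∑' (s : G), ‖f s‖ ^ (2 : ℝ≥0∞).toReal :=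
        (Equiv.mulLeft t⁻¹).tsum_eq (fun s => ‖f s‖ ^ (2 : ℝ≥0∞).toReal)
      show ∑' (s : G), ‖f (t⁻¹ * s)‖ ^ (2 : ℝ≥0∞).toReal ≤ ‖f‖ ^ (2 : ℝ≥0∞).toReal
      rw [h1, ← lp.norm_rpow_eq_tsum (by norm_num) f])

/-- The diagonal ("block multiplication") operator on `ℓ²(X,H)` associated with a
uniformly bounded family of operators. -/
def diagOp (T : X → (H →L[ℂ] H)) (C : ℝ) (hC : ∀ x, ‖T x‖ ≤ C) :
    lp (fun _ : X => H) 2 →L[ℂ] lp (fun _ : X => H) 2 := by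
  have hC' : ∀ x, ‖T x‖ ≤ max C 0 := fun x => (hC x).trans (le_max_left _ _)
  have hr : (0:ℝ) < (2 : ℝ≥0∞).toReal := by norm_num
  have key : ∀ (f : lp (fun _ : X => H) 2) (x : X),
      ‖T x (f x)‖ ^ (2 : ℝ≥0∞).toReal
        ≤ (max C 0) ^ (2 : ℝ≥0∞).toReal * ‖f x‖ ^ (2 : ℝ≥0∞).toReal := by
    intro f x
    have h1 : ‖T x (f x)‖ ≤ max C 0 * ‖f x‖ :=
      ((T x).le_opNorm (f x)).trans
        (mul_le_mul_of_nonneg_right (hC' x) (norm_nonneg _))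
    calc ‖T x (f x)‖ ^ (2 : ℝ≥0∞).toReal
        ≤ (max C 0 * ‖f x‖) ^ (2 : ℝ≥0∞).toReal :=
          Real.rpow_le_rpow (norm_nonneg _) h1 hr.le
      _ = (max C 0) ^ (2 : ℝ≥0∞).toReal * ‖f x‖ ^ (2 : ℝ≥0∞).toReal :=
          Real.mul_rpow (le_max_right _ _) (norm_nonneg _)
  have mem : ∀ f : lp (fun _ : X => H) 2, Memℓp (fun x => T x (f x)) 2 := by
    intro f
    apply memℓp_gen
    exact Summable.of_nonneg_of_le
      (fun x => Real.rpow_nonneg (norm_nonneg _) _) (key f)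
      (((lp.memℓp f).summable hr).mul_left _)
  exact LinearMap.mkContinuous
    { toFun := fun f => ⟨fun x => T x (f x), mem f⟩
      map_add' := fun f g => by
        apply lp.ext; funext x
        have := congrFun (lp.coeFn_add f g) x
        show T x ((f + g) x) = _
        rw [this]
        exact map_add (T x) (f x) (g x)
      map_smul' := fun c f => by
        apply lp.ext; funext x
        have := congrFun (lp.coeFn_smul c f) x
        show T x ((c • f) x) = _
        rw [this]
        simp [lp.coeFn_smul] }
    (max C 0) (fun f => by
      refine lp.norm_le_of_tsum_le hr (by positivity) ?_
      show ∑' (x : X), ‖T x (f x)‖ ^ (2 : ℝ≥0∞).toReal ≤ _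
      calc ∑' (x : X), ‖T x (f x)‖ ^ (2 : ℝ≥0∞).toReal
          ≤ ∑' (x : X), (max C 0) ^ (2 : ℝ≥0∞).toReal * ‖f x‖ ^ (2 : ℝ≥0∞).toReal :=
            Summable.tsum_le_tsum (key f)
              (Summable.of_nonneg_of_le
                (fun x => Real.rpow_nonneg (norm_nonneg _) _) (key f)
                (((lp.memℓp f).summable hr).mul_left _))
              (((lp.memℓp f).summable hr).mul_left _)
        _ = (max C 0) ^ (2 : ℝ≥0∞).toReal * ∑' (x : X), ‖f x‖ ^ (2 : ℝ≥0∞).toReal :=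
            tsum_mul_left
        _ = (max C 0) ^ (2 : ℝ≥0∞).toReal * ‖f‖ ^ (2 : ℝ≥0∞).toReal := by
            rw [lp.norm_rpow_eq_tsum hr]
        _ = (max C 0 * ‖f‖) ^ (2 : ℝ≥0∞).toReal :=
            (Real.mul_rpow (by positivity) (norm_nonneg _)).symm)

section CB

variable {A' B' : Type*} [AddCommMonoid A'] [Module ℂ A'] [AddCommMonoid B'] [Module ℂ B']
variable {K : Type*} [NormedAddCommGroup K] [InnerProductSpace ℂ K] [CompleteSpace K]

/-- All matrix amplifications of `Φ` are bounded by `C`, where matrices over the abstract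
spaces are normed through the given embeddings into concrete operator algebras. -/
def CBBound (ιA : A' → (H →L[ℂ] H)) (ιB : B' → (K →L[ℂ] K))
    (Φ : A' →ₗ[ℂ] B') (C : ℝ) : Prop :=
  ∀ (n : ℕ) (M : Matrix (Fin n) (Fin n) A'),
    ‖matOp (M.map (fun a => ιB (Φ a)))‖ ≤ C * ‖matOp (M.map ιA)‖

/-- Complete boundedness of a linear map, relative to embeddings of its domain and
codomain into concrete operator algebras. -/
def IsCB (ιA : A' → (H →L[ℂ] H)) (ιB : B' → (K →L[ℂ] K)) (Φ : A' →ₗ[ℂ] B') : Prop :=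
  ∃ C : ℝ, 0 ≤ C ∧ CBBound ιA ιB Φ C

/-- The completely bounded norm of a linear map, relative to embeddings of its domain
and codomain into concrete operator algebras. -/
def cbNorm (ιA : A' → (H →L[ℂ] H)) (ιB : B' → (K →L[ℂ] K)) (Φ : A' →ₗ[ℂ] B') : ℝ :=
  sInf { C : ℝ | 0 ≤ C ∧ CBBound ιA ιB Φ C }

end CB

section Schur

variable {A : Type*} [NonUnitalCStarAlgebra A]

/-- A *-representation is non-degenerate if the span of the vectors in its range is dense. -/
def NondegenerateRep {K : Type*} [NormedAddCommGroup K] [InnerProductSpace ℂ K]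
    [CompleteSpace K] (ρ : A →⋆ₙₐ[ℂ] (K →L[ℂ] K)) : Prop :=
  Dense (Submodule.span ℂ {ξ : K | ∃ (a : A) (v : K), ρ a v = ξ} : Set K)

/-- A function `φ : X × X → CB(A, B(H))` is of positive type if it maps positive
matrices to positive matrices, entrywise. -/
def PositiveType (φ : X → X → (A →ₗ[ℂ] (H →L[ℂ] H))) : Prop :=
  ∀ (m : ℕ) (x : Fin m → X) (a : Matrix (Fin m) (Fin m) A),
    MatPos a → MatPos (Matrix.of fun p q => φ (x p) (x q) (a p q))

/-- A kernel `k : X × X → A` is positive definite if all the matrices obtained by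
sampling it at finitely many points are positive. -/
def PosDefKernel (k : X × X → A) : Prop :=
  ∀ (n : ℕ) (x : Fin n → X), MatPos (Matrix.of fun i j => k (x i, x j))

/-- The operator `T_k` on `ℓ²(X,H)` of a kernel `k : X × X → A`, via the embedding
`ι : A → B(H)` (it is `0` unless `k` is finitely supported). -/
def TKer (ι : A →⋆ₙₐ[ℂ] (H →L[ℂ] H)) (k : X × X → A) :
    lp (fun _ : X => H) 2 →L[ℂ] lp (fun _ : X => H) 2 :=
  TOp (fun p => ι (k p))

/-- `C` is a complete bound for the Schur multiplication map `S_φ : T_k ↦ T_{φ·k}`,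
tested on (matrices of) finitely supported kernels, which span a dense subspace of
`K(ℓ²(X)) ⊗ A`. -/
def SchurBound (ι : A →⋆ₙₐ[ℂ] (H →L[ℂ] H)) (φ : X → X → (A →ₗ[ℂ] (H →L[ℂ] H)))
    (C : ℝ) : Prop :=
  ∀ (n : ℕ) (k : Fin n → Fin n → (X × X → A)),
    (∀ i j, (Function.support (k i j)).Finite) →
    ‖matOp (Matrix.of fun i j => TOp (fun p => φ p.1 p.2 (k i j p)))‖
      ≤ C * ‖matOp (Matrix.of fun i j => TKer ι (k i j))‖

/-- `φ` is a Schur `A`-multiplier: the map `S_φ : T_k ↦ T_{φ·k}` is completely bounded. -/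
def IsSchurMultiplier (ι : A →⋆ₙₐ[ℂ] (H →L[ℂ] H))
    (φ : X → X → (A →ₗ[ℂ] (H →L[ℂ] H))) : Prop :=
  ∃ C : ℝ, 0 ≤ C ∧ SchurBound ι φ C

/-- The multiplier norm `‖φ‖_m = ‖S_φ‖_cb` of a Schur `A`-multiplier. -/
def schurNorm (ι : A →⋆ₙₐ[ℂ] (H →L[ℂ] H))
    (φ : X → X → (A →ₗ[ℂ] (H →L[ℂ] H))) : ℝ :=
  sInf { C : ℝ | 0 ≤ C ∧ SchurBound ι φ C }

/-- Complete positivity of the map `S_φ : K(ℓ²(X)) ⊗ A → K(ℓ²(X)) ⊗ B(H)`, tested on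
(matrices of) finitely supported kernels. -/
def SchurCP (ι : A →⋆ₙₐ[ℂ] (H →L[ℂ] H)) (φ : X → X → (A →ₗ[ℂ] (H →L[ℂ] H))) : Prop :=
  ∀ (n : ℕ) (k : Fin n → Fin n → (X × X → A)),
    (∀ i j, (Function.support (k i j)).Finite) →
    MatPos (Matrix.of fun i j => TKer ι (k i j)) →
    MatPos (Matrix.of fun i j => TOp (fun p => φ p.1 p.2 (k i j p)))

end Schur

section Dynamics

variable {A : Type*} [NonUnitalCStarAlgebra A]

/-- `α` is an action of the group `G` on `A` by *-automorphisms. -/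
def IsAction (α : G → A ≃⋆ₐ[ℂ] A) : Prop :=
  (∀ a, α 1 a = a) ∧ ∀ s t : G, ∀ a : A, α (s * t) a = α s (α t a)

/-- A *-automorphism of `A`, as a `ℂ`-linear map. -/
def autLin (e : A ≃⋆ₐ[ℂ] A) : A →ₗ[ℂ] A :=
  { toFun := e
    map_add' := fun a b => map_add e a b
    map_smul' := fun c a => map_smul e c a }

/-- The representation `π` of `A` on `ℓ²(G,H)`: `(π(a)ξ)(s) = α_{s⁻¹}(a)(ξ(s))`. -/
def piRep (ι : A →⋆ₙₐ[ℂ] (H →L[ℂ] H)) (α : G → A ≃⋆ₐ[ℂ] A) (a : A) :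
    lp (fun _ : G => H) 2 →L[ℂ] lp (fun _ : G => H) 2 :=
  diagOp (fun s => ι (α s⁻¹ a)) ‖a‖ (fun s =>
    (NonUnitalStarAlgHom.norm_apply_le ι (α s⁻¹ a)).trans_eq
      (StarAlgEquiv.norm_map (α s⁻¹) a))

/-- The reduced crossed product `A ⋊_{α,r} G`, realised concretely on `ℓ²(G,H)` as the
norm closure of the linear span of the operators `π(a)λ_t`. -/
def CrossedSet (ι : A →⋆ₙₐ[ℂ] (H →L[ℂ] H)) (α : G → A ≃⋆ₐ[ℂ] A) :
    Set (lp (fun _ : G => H) 2 →L[ℂ] lp (fun _ : G => H) 2) :=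
  closure (Submodule.span ℂ
    {x | ∃ (a : A) (t : G), x = piRep ι α a * lam t} : Set _)

/-- `E` is the canonical conditional expectation of the reduced crossed product onto `A`:
it is characterised by `ι (E x) = (x)_{e,e}`, the `(e,e)` matrix entry of `x`. -/
def IsCondExp (ι : A →⋆ₙₐ[ℂ] (H →L[ℂ] H)) (α : G → A ≃⋆ₐ[ℂ] A)
    (E : (lp (fun _ : G => H) 2 →L[ℂ] lp (fun _ : G => H) 2) →ₗ[ℂ] A) : Prop :=
  ∀ x ∈ CrossedSet ι α, ι (E x) = (lpEval (1 : G)) ∘L x ∘L (lpSingle (1 : G))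

/-- The defining property of the map `S_F` associated with `F : G → CB(A)`:
`S_F(π(a)λ_s) = π(F(s)(a))λ_s`. -/
def HSGenProp (ι : A →⋆ₙₐ[ℂ] (H →L[ℂ] H)) (α : G → A ≃⋆ₐ[ℂ] A)
    (F : G → (A →ₗ[ℂ] A))
    (Φ : (lp (fun _ : G => H) 2 →L[ℂ] lp (fun _ : G => H) 2) →ₗ[ℂ]
         (lp (fun _ : G => H) 2 →L[ℂ] lp (fun _ : G => H) 2)) : Prop :=
  ∀ (a : A) (s : G), Φ (piRep ι α a * lam s) = piRep ι α (F s a) * lam s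

/-- `Φ` maps the reduced crossed product into itself and, on matrices over the reduced
crossed product, all amplifications of `Φ` are bounded by `C`. -/
def CBBoundOnCrossed (ι : A →⋆ₙₐ[ℂ] (H →L[ℂ] H)) (α : G → A ≃⋆ₐ[ℂ] A)
    (Φ : (lp (fun _ : G => H) 2 →L[ℂ] lp (fun _ : G => H) 2) →ₗ[ℂ]
         (lp (fun _ : G => H) 2 →L[ℂ] lp (fun _ : G => H) 2)) (C : ℝ) : Prop :=
  ∀ (n : ℕ) (M : Matrix (Fin n) (Fin n)
      (lp (fun _ : G => H) 2 →L[ℂ] lp (fun _ : G => H) 2)),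
    (∀ i j, M i j ∈ CrossedSet ι α) →
      ‖matOp (M.map Φ)‖ ≤ C * ‖matOp M‖

/-- `Φ` is completely positive on the reduced crossed product: matrices over the crossed
product which are positive are mapped to positive matrices. -/
def CPOnCrossed (ι : A →⋆ₙₐ[ℂ] (H →L[ℂ] H)) (α : G → A ≃⋆ₐ[ℂ] A)
    (Φ : (lp (fun _ : G => H) 2 →L[ℂ] lp (fun _ : G => H) 2) →ₗ[ℂ]
         (lp (fun _ : G => H) 2 →L[ℂ] lp (fun _ : G => H) 2)) : Prop :=
  (∀ x ∈ CrossedSet ι α, Φ x ∈ CrossedSet ι α) ∧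
  ∀ (n : ℕ) (M : Matrix (Fin n) (Fin n)
      (lp (fun _ : G => H) 2 →L[ℂ] lp (fun _ : G => H) 2)),
    (∀ i j, M i j ∈ CrossedSet ι α) → MatPos M → MatPos (M.map Φ)

/-- `F : G → CB(A)` is a Herz-Schur `(A,G,α)`-multiplier: the map `S_F` determined by
`S_F(π(a)λ_s) = π(F(s)(a))λ_s` extends to a completely bounded map on `A ⋊_{α,r} G`. -/
def IsHerzSchurMultiplier (ι : A →⋆ₙₐ[ℂ] (H →L[ℂ] H)) (α : G → A ≃⋆ₐ[ℂ] A)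
    (F : G → (A →ₗ[ℂ] A)) : Prop :=
  ∃ Φ, HSGenProp ι α F Φ ∧ (∀ x ∈ CrossedSet ι α, Φ x ∈ CrossedSet ι α) ∧
    ∃ C : ℝ, 0 ≤ C ∧ CBBoundOnCrossed ι α Φ C

/-- `F : G → CB(A)` is a completely positive Herz-Schur `(A,G,α)`-multiplier: the map
`S_F` extends to a completely positive (hence completely bounded) map on `A ⋊_{α,r} G`. -/
def IsHerzSchurMultiplierCP (ι : A →⋆ₙₐ[ℂ] (H →L[ℂ] H)) (α : G → A ≃⋆ₐ[ℂ] A)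
    (F : G → (A →ₗ[ℂ] A)) : Prop :=
  ∃ Φ, HSGenProp ι α F Φ ∧ CPOnCrossed ι α Φ ∧
    ∃ C : ℝ, 0 ≤ C ∧ CBBoundOnCrossed ι α Φ C

/-- The function `N(F) : G × G → CB(A)`, `N(F)(s,t)(a) = α_{s⁻¹}(F(st⁻¹)(α_s(a)))`. -/
def NF (α : G → A ≃⋆ₐ[ℂ] A) (F : G → (A →ₗ[ℂ] A)) : G → G → (A →ₗ[ℂ] A) :=
  fun s t => (autLin (α s⁻¹)) ∘ₗ (F (s * t⁻¹)) ∘ₗ (autLin (α s))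

end Dynamics

section Trace

variable {A : Type*} [NonUnitalCStarAlgebra A]

/-- `τ` is a positive linear functional. -/
def IsPositiveFunctional (τ : A →ₗ[ℂ] ℂ) : Prop :=
  ∀ a : A, 0 ≤ τ (star a * a)

/-- `τ` is tracial. -/
def IsTracial (τ : A →ₗ[ℂ] ℂ) : Prop :=
  ∀ a b : A, τ (a * b) = τ (b * a)

/-- `τ` is faithful. -/
def IsFaithfulFunctional (τ : A →ₗ[ℂ] ℂ) : Prop :=
  ∀ a : A, τ (star a * a) = 0 → a = 0

/-- The `L²`-norm `‖a‖_{2,τ} = τ(a*a)^{1/2}` associated with a positive functional `τ`. -/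
def l2norm (τ : A →ₗ[ℂ] ℂ) (a : A) : ℝ :=
  Real.sqrt (τ (star a * a)).re

/-- A map `Φ : A → A` is `L²`-bounded by `C` with respect to `τ`. -/
def L2BoundedBy (τ : A →ₗ[ℂ] ℂ) (Φ : A →ₗ[ℂ] A) (C : ℝ) : Prop :=
  ∀ a : A, l2norm τ (Φ a) ≤ C * l2norm τ a

/-- A map `Φ : A → A` is `L²`-bounded with respect to `τ`, i.e. it extends to a bounded
operator `T_Φ` on `L²(A,τ)`. -/
def L2Bounded (τ : A →ₗ[ℂ] ℂ) (Φ : A →ₗ[ℂ] A) : Prop :=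
  ∃ C : ℝ, 0 ≤ C ∧ L2BoundedBy τ Φ C

/-- The norm of the extension `T_Φ` of `Φ` to `L²(A,τ)`. -/
def l2OpNorm (τ : A →ₗ[ℂ] ℂ) (Φ : A →ₗ[ℂ] A) : ℝ :=
  sInf { C : ℝ | 0 ≤ C ∧ L2BoundedBy τ Φ C }

/-- `Φ` is `L²`-compact with respect to `τ`: the image under `Φ` of the `L²`-unit ball of
`A` is totally bounded in the `L²`-norm; equivalently, the extension `T_Φ` of `Φ` to
`L²(A,τ)` is a compact operator. -/
def L2Compact (τ : A →ₗ[ℂ] ℂ) (Φ : A →ₗ[ℂ] A) : Prop :=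
  ∀ ε : ℝ, 0 < ε → ∃ S : Finset A, ∀ a : A, l2norm τ a ≤ 1 →
    ∃ b ∈ S, l2norm τ (Φ a - b) < ε

end Trace

section Props

variable {A : Type*} [CStarAlgebra A]

/-- The pair `(A,τ)` has the C*-algebra Haagerup property (Definition 3.1, Dong). -/
def CStarHaagerup (τ : A →ₗ[ℂ] ℂ) : Prop :=
  ∃ (I : Type) (_ : Nonempty I) (_ : SemilatticeSup I) (Φ : I → (A →ₗ[ℂ] A)),
    (∀ i, Φ i 1 = 1) ∧
    (∀ i, IsCompletelyPositive (Φ i)) ∧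
    (∀ i (a : A), τ (Φ i (star a * a)) ≤ τ (star a * a)) ∧
    (∀ i, L2Compact τ (Φ i)) ∧
    (∀ a : A, Filter.Tendsto (fun i => l2norm τ (Φ i a - a)) Filter.atTop (nhds 0))

/-- `A` is a nuclear C*-algebra: there is a net of finite-rank completely positive
contractions converging to the identity in the point-norm topology. -/
def NuclearCStarAlgebra (A : Type*) [NonUnitalCStarAlgebra A] : Prop :=
  ∃ (I : Type) (_ : Nonempty I) (_ : SemilatticeSup I) (Φ : I → (A →ₗ[ℂ] A)),
    (∀ i, IsCompletelyPositive (Φ i)) ∧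
    (∀ i (a : A), ‖Φ i a‖ ≤ ‖a‖) ∧
    (∀ i, FiniteDimensional ℂ (LinearMap.range (Φ i))) ∧
    (∀ a : A, Filter.Tendsto (fun i => ‖Φ i a - a‖) Filter.atTop (nhds 0))

/-- A discrete group `G` has the Haagerup property: there is a net of normalised
positive-definite functions on `G`, vanishing at infinity, converging pointwise to `1`. -/
def GroupHaagerup (G : Type*) [Group G] : Prop :=
  ∃ (I : Type) (_ : Nonempty I) (_ : SemilatticeSup I) (φ : I → G → ℂ),
    (∀ i, φ i 1 = 1) ∧
    (∀ i (n : ℕ) (s : Fin n → G) (μ : Fin n → ℂ),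
      0 ≤ ∑ k, ∑ l, (starRingEnd ℂ) (μ k) * φ i ((s k)⁻¹ * s l) * μ l) ∧
    (∀ i, ∀ ε : ℝ, 0 < ε → ∃ S : Finset G, ∀ s ∉ S, ‖φ i s‖ ≤ ε) ∧
    (∀ s : G, Filter.Tendsto (fun i => φ i s) Filter.atTop (nhds 1))

end Props

section More

variable {A : Type*} [NonUnitalCStarAlgebra A]

/-- A star homomorphism, as a `ℂ`-linear map. -/
def iotaLin {B : Type*} [NonUnitalCStarAlgebra B] (ι : A →⋆ₙₐ[ℂ] B) : A →ₗ[ℂ] B :=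
  { toFun := ι
    map_add' := fun a b => map_add ι a b
    map_smul' := fun c a => map_smul ι c a }

/-- A function `φ : X × X → CB(A)` with values in the maps on `A` is of positive type. -/
def PositiveTypeA (φ : X → X → (A →ₗ[ℂ] A)) : Prop :=
  ∀ (m : ℕ) (x : Fin m → X) (a : Matrix (Fin m) (Fin m) A),
    MatPos a → MatPos (Matrix.of fun p q => φ (x p) (x q) (a p q))

/-- The representation `π` of `A` on `ℓ²(G,H)`, as a linear map. -/
def piRepLin (ι : A →⋆ₙₐ[ℂ] (H →L[ℂ] H)) (α : G → A ≃⋆ₐ[ℂ] A) :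
    A →ₗ[ℂ] (lp (fun _ : G => H) 2 →L[ℂ] lp (fun _ : G => H) 2) :=
  { toFun := piRep ι α
    map_add' := fun a b => by
      apply ContinuousLinearMap.ext; intro f
      apply lp.ext; funext s
      have h1 : (((piRep ι α a + piRep ι α b) f :
          lp (fun _ : G => H) 2) : ∀ _ : G, H) s
          = ((piRep ι α a f : ∀ _ : G, H) s) + ((piRep ι α b f : ∀ _ : G, H) s) := by
        rw [ContinuousLinearMap.add_apply]
        exact congrFun (lp.coeFn_add (piRep ι α a f) (piRep ι α b f)) s
      show ι (α s⁻¹ (a + b)) (f s) = _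
      rw [h1]
      show _ = ι (α s⁻¹ a) (f s) + ι (α s⁻¹ b) (f s)
      rw [map_add (α s⁻¹), map_add ι, ContinuousLinearMap.add_apply]
    map_smul' := fun c a => by
      apply ContinuousLinearMap.ext; intro f
      apply lp.ext; funext s
      have h1 : (((c • piRep ι α a) f :
          lp (fun _ : G => H) 2) : ∀ _ : G, H) s
          = c • ((piRep ι α a f : ∀ _ : G, H) s) := by
        rw [ContinuousLinearMap.smul_apply]
        exact congrFun (lp.coeFn_smul c (piRep ι α a f)) s
      show ι (α s⁻¹ (c • a)) (f s) = _
      rw [RingHom.id_apply, h1]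
      show _ = c • ι (α s⁻¹ a) (f s)
      rw [map_smul (α s⁻¹), map_smul ι, ContinuousLinearMap.smul_apply] }

/-- The completely bounded norm of a map defined on the reduced crossed product. -/
def cbNormOnCrossed (ι : A →⋆ₙₐ[ℂ] (H →L[ℂ] H)) (α : G → A ≃⋆ₐ[ℂ] A)
    (Φ : (lp (fun _ : G => H) 2 →L[ℂ] lp (fun _ : G => H) 2) →ₗ[ℂ]
         (lp (fun _ : G => H) 2 →L[ℂ] lp (fun _ : G => H) 2)) : ℝ :=
  sInf { C : ℝ | 0 ≤ C ∧ CBBoundOnCrossed ι α Φ C }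

/-- The `L²`-norm `‖x‖_{2,τ'}` on the reduced crossed product induced by the trace
`τ' = τ ∘ E`. -/
def l2normCr (τ : A →ₗ[ℂ] ℂ)
    (E : (lp (fun _ : G => H) 2 →L[ℂ] lp (fun _ : G => H) 2) →ₗ[ℂ] A)
    (x : lp (fun _ : G => H) 2 →L[ℂ] lp (fun _ : G => H) 2) : ℝ :=
  Real.sqrt (τ (E (star x * x))).re

/-- The map `h_Φ : G → CB(A)` associated with a map `Φ` on the reduced crossed product:
`h_Φ(s)(a) = E(Φ(π(a)λ_s)λ_s*)`. -/
def hMap (ι : A →⋆ₙₐ[ℂ] (H →L[ℂ] H)) (α : G → A ≃⋆ₐ[ℂ] A)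
    (E : (lp (fun _ : G => H) 2 →L[ℂ] lp (fun _ : G => H) 2) →ₗ[ℂ] A)
    (Φ : (lp (fun _ : G => H) 2 →L[ℂ] lp (fun _ : G => H) 2) →ₗ[ℂ]
         (lp (fun _ : G => H) 2 →L[ℂ] lp (fun _ : G => H) 2))
    (s : G) : A →ₗ[ℂ] A :=
  E ∘ₗ (LinearMap.mulRight ℂ (star (lam s))) ∘ₗ Φ ∘ₗ
    (LinearMap.mulRight ℂ (lam (H := H) s)) ∘ₗ piRepLin ι α

end More

section BigProps

open Filter

variable {A : Type*} [CStarAlgebra A]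

/-- The Haagerup property for the `C*`-dynamical system `(A,G,α,τ)` (Definition 3.3). -/
def DynHaagerup (ι : A →⋆ₙₐ[ℂ] (H →L[ℂ] H)) (α : G → A ≃⋆ₐ[ℂ] A)
    (τ : A →ₗ[ℂ] ℂ) : Prop :=
  ∃ (I : Type) (_ : Nonempty I) (_ : SemilatticeSup I) (F : I → G → (A →ₗ[ℂ] A)),
    (∀ i, IsHerzSchurMultiplierCP ι α (F i)) ∧
    (∀ i, F i 1 1 = 1) ∧
    (∀ i (a : A), τ (F i 1 (star a * a)) ≤ τ (star a * a)) ∧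
    (∀ i (t : G), L2Compact τ (F i t)) ∧
    (∀ i, ∀ ε : ℝ, 0 < ε → ∃ S : Finset G, ∀ s ∉ S, l2OpNorm τ (F i s) ≤ ε) ∧
    (∀ (t : G) (a : A),
      Tendsto (fun i => l2norm τ (F i t a - a)) atTop (nhds 0))

/-- The C*-algebra Haagerup property for the reduced crossed product `A ⋊_{α,r} G`
endowed with the induced trace `τ' = τ ∘ E` (Definition 3.1). -/
def CrossedCStarHaagerup (ι : A →⋆ₙₐ[ℂ] (H →L[ℂ] H)) (α : G → A ≃⋆ₐ[ℂ] A)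
    (τ : A →ₗ[ℂ] ℂ)
    (E : (lp (fun _ : G => H) 2 →L[ℂ] lp (fun _ : G => H) 2) →ₗ[ℂ] A) : Prop :=
  ∃ (I : Type) (_ : Nonempty I) (_ : SemilatticeSup I)
    (Φ : I → ((lp (fun _ : G => H) 2 →L[ℂ] lp (fun _ : G => H) 2) →ₗ[ℂ]
              (lp (fun _ : G => H) 2 →L[ℂ] lp (fun _ : G => H) 2))),
    (∀ i, Φ i 1 = 1) ∧
    (∀ i, CPOnCrossed ι α (Φ i)) ∧
    (∀ i, ∀ x ∈ CrossedSet ι α, τ (E (Φ i (star x * x))) ≤ τ (E (star x * x))) ∧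
    (∀ i, ∀ ε : ℝ, 0 < ε →
      ∃ S : Finset (lp (fun _ : G => H) 2 →L[ℂ] lp (fun _ : G => H) 2),
        ∀ x ∈ CrossedSet ι α, l2normCr τ E x ≤ 1 →
          ∃ b ∈ S, l2normCr τ E (Φ i x - b) < ε) ∧
    (∀ x ∈ CrossedSet ι α,
      Tendsto (fun i => l2normCr τ E (Φ i x - x)) atTop (nhds 0))

end BigProps

section Nuc

open Filter

variable {A : Type*} [NonUnitalCStarAlgebra A]

/-- Nuclearity of the reduced crossed product `A ⋊_{α,r} G`: there is a net of
finite-rank completely positive contractions on it converging to the identity in the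
point-norm topology. -/
def CrossedNuclear (ι : A →⋆ₙₐ[ℂ] (H →L[ℂ] H)) (α : G → A ≃⋆ₐ[ℂ] A) : Prop :=
  ∃ (I : Type) (_ : Nonempty I) (_ : SemilatticeSup I)
    (Φ : I → ((lp (fun _ : G => H) 2 →L[ℂ] lp (fun _ : G => H) 2) →ₗ[ℂ]
              (lp (fun _ : G => H) 2 →L[ℂ] lp (fun _ : G => H) 2))),
    (∀ i, CPOnCrossed ι α (Φ i)) ∧
    (∀ i, ∀ x ∈ CrossedSet ι α, ‖Φ i x‖ ≤ ‖x‖) ∧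
    (∀ i, FiniteDimensional ℂ
      (Submodule.span ℂ ((fun x => Φ i x) '' CrossedSet ι α))) ∧
    (∀ x ∈ CrossedSet ι α, Tendsto (fun i => ‖Φ i x - x‖) atTop (nhds 0))

/-- Nuclearity of the `C*`-dynamical system `(A,G,α)` (Definition 4.2): a net of
completely positive, finitely supported Herz-Schur multipliers, with `‖F_i(e)‖_cb ≤ 1`,
with finite-rank values, converging to the identity pointwise in norm. -/
def DynNuclear (ι : A →⋆ₙₐ[ℂ] (H →L[ℂ] H)) (α : G → A ≃⋆ₐ[ℂ] A) : Prop :=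
  ∃ (I : Type) (_ : Nonempty I) (_ : SemilatticeSup I) (F : I → G → (A →ₗ[ℂ] A)),
    (∀ i, IsHerzSchurMultiplierCP ι α (F i)) ∧
    (∀ i, (Function.support (F i)).Finite) ∧
    (∀ i, CBBound (fun a => ι a) (fun a => ι a) (F i 1) 1) ∧
    (∀ i (s : G), FiniteDimensional ℂ (LinearMap.range (F i s))) ∧
    (∀ (s : G) (a : A), Tendsto (fun i => ‖F i s a - a‖) atTop (nhds 0))

end Nuc

section Amen

open Filter

variable {A : Type*} [CStarAlgebra A]

/-- Amenability of the action `α` of a discrete group `G` on a unital C*-algebra `A`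
(Definition 4.5): a net of finitely supported functions `T_i : G → Z(A)⁺` with
`Σ_s T_i(s)² = 1` and `‖Σ_s (T_i(s) - α_t(T_i(t⁻¹s)))*(T_i(s) - α_t(T_i(t⁻¹s)))‖ → 0`. -/
def AmenableAction {G : Type*} [Group G] (α : G → A ≃⋆ₐ[ℂ] A) : Prop :=
  ∃ (I : Type) (_ : Nonempty I) (_ : SemilatticeSup I) (T : I → G → A),
    (∀ i, (Function.support (T i)).Finite) ∧
    (∀ i (s : G) (c : A), Commute (T i s) c) ∧
    (∀ i (s : G), ∃ b : A, T i s = star b * b) ∧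
    (∀ i, ∑ᶠ s : G, T i s * T i s = 1) ∧
    (∀ t : G, Tendsto (fun i =>
        ‖∑ᶠ s : G, star (T i s - α t (T i (t⁻¹ * s))) *
          (T i s - α t (T i (t⁻¹ * s)))‖) atTop (nhds 0))

end Amen

universe u v w

/-- Data for a Stinespring-type representation of an operator-valued function on
`X × X`: a Hilbert space `K`, a *-representation `ρ : A → B(K)` and
families of operators `V, W : X → B(H,K)`. -/
structure OpValuedRep (A : Type u) [NonUnitalCStarAlgebra A]
    (H : Type v) [NormedAddCommGroup H] [InnerProductSpace ℂ H] [CompleteSpace H]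
    (X : Type w) where
  /-- the Hilbert space of the representation -/
  K : Type (max u v w)
  [nacg : NormedAddCommGroup K]
  [ips : InnerProductSpace ℂ K]
  [cpl : CompleteSpace K]
  /-- the representation -/
  ρ : A →⋆ₙₐ[ℂ] (K →L[ℂ] K)
  /-- the left family of operators -/
  V : X → (H →L[ℂ] K)
  /-- the right family of operators -/
  W : X → (H →L[ℂ] K)

attribute [instance] OpValuedRep.nacg OpValuedRep.ips OpValuedRep.cpl

end
noncomputable section
open scoped ComplexOrder ENNReal
open Matrix

lemma cstar_sum_aux {B : Type*} [CStarAlgebra B] {κ : Type*} (T : Finset κ) (N : κ → B) :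
    ∃ x : B, ∑ l ∈ T, star (N l) * N l = star x * x := by
  let _ : PartialOrder B := CStarAlgebra.spectralOrder B
  have : StarOrderedRing B := CStarAlgebra.spectralOrderedRing B
  exact CStarAlgebra.nonneg_iff_eq_star_mul_self.1
    (Finset.sum_nonneg fun l _ => star_mul_self_nonneg _)

lemma matPos_sum_aux {A : Type*} [CStarAlgebra A] {n : ℕ} {κ : Type*} (T : Finset κ)
    (N : κ → Matrix (Fin n) (Fin n) A) :
    MatPos (∑ l ∈ T, (N l)ᴴ * N l) := by
  letI : PartialOrder A := CStarAlgebra.spectralOrder A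
  haveI : StarOrderedRing A := CStarAlgebra.spectralOrderedRing A
  obtain ⟨x, hx⟩ := cstar_sum_aux (B := CStarMatrix (Fin n) (Fin n) A) T
    (fun l => CStarMatrix.ofMatrix (N l))
  exact ⟨CStarMatrix.ofMatrix.symm x, hx⟩

lemma NF_apply_aux {A : Type*} [CStarAlgebra A] {G : Type*} [Group G]
    (α : G → A ≃⋆ₐ[ℂ] A) (hα : IsAction α) (φ : G → A) (s t : G) (a : A) :
    NF α (fun t => LinearMap.mulLeft ℂ (φ t)) s t a = α s⁻¹ (φ (s * t⁻¹)) * a := by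
  have h : α s⁻¹ (α s a) = a := by rw [← hα.2, inv_mul_cancel, hα.1]
  show α s⁻¹ (φ (s * t⁻¹) * α s a) = _
  rw [map_mul, h]

/-- **α-positive definiteness.** Let `A` be unital and `φ : G → Z(A)` a function into
the centre of `A`; let `F_φ(t)` be multiplication by `φ(t)`.  Then `φ` is α-positive
definite if and only if `N(F_φ)` is of positive type. -/
theorem alphaPosDef_iff_NF_positiveType
    {A : Type*} [CStarAlgebra A] {G : Type*} [Group G]
    (α : G → A ≃⋆ₐ[ℂ] A) (hα : IsAction α)
    (φ : G → A) (hcentral : ∀ (t : G) (c : A), Commute (φ t) c) :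
    (∀ (n : ℕ) (s : Fin n → G),
      MatPos (Matrix.of fun i j : Fin n => α (s i) (φ ((s i)⁻¹ * s j)))) ↔
    PositiveTypeA (NF α (fun t => LinearMap.mulLeft ℂ (φ t))) := by
  have hc : ∀ (s t : G) (c : A), α s (φ t) * c = c * α s (φ t) := by
    intro s t c
    have h : α s (α s⁻¹ c) = c := by rw [← hα.2, mul_inv_cancel, hα.1]
    rw [← h, ← map_mul, ← map_mul, (hcentral t _).eq]
  constructor
  · intro h m x a ⟨B, hB⟩
    obtain ⟨C, hC⟩ := h m (fun i => (x i)⁻¹)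
    have key := matPos_sum_aux Finset.univ
      (fun l : Fin m => C * Matrix.diagonal (fun i => B l i))
    refine Eq.mp (congrArg MatPos (Eq.symm ?_)) key
    ext p q
    have hK := congrFun (congrFun hC p) q
    simp only [Matrix.of_apply, inv_inv] at hK
    simp only [Matrix.of_apply, NF_apply_aux α hα, Matrix.sum_apply]
    subst hB
    rw [Matrix.mul_apply, Finset.mul_sum]
    refine Finset.sum_congr rfl fun l _ => ?_
    rw [Matrix.conjTranspose_mul, Matrix.mul_assoc, ← Matrix.mul_assoc Cᴴ, ← hC,
      Matrix.diagonal_conjTranspose, Matrix.diagonal_mul, Matrix.mul_diagonal,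
      Matrix.of_apply, inv_inv, Matrix.conjTranspose_apply, ← mul_assoc, hc, mul_assoc]
    rfl
  · intro h n s
    have hJ : MatPos (Matrix.of fun _ _ : Fin n => (1 : A)) := by
      rcases n with _ | n
      · exact ⟨0, by ext i; exact i.elim0⟩
      · refine ⟨Matrix.of fun i _ => if i = 0 then 1 else 0, ?_⟩
        ext i j
        simp [Matrix.mul_apply, Matrix.conjTranspose_apply]
    have := h n (fun i => (s i)⁻¹) _ hJ
    simpa only [NF_apply_aux α hα, inv_inv, Matrix.of_apply, mul_one] using this

end
end

section
/- Let (A,G,α) be a C*-dynamical system with G discrete, F a finite subset of G, and Φ ∈ CB(A). The map h_F : G → B(A) given by h_F(s)(a) = Σ_{p ∈ F ∩ sF} (α_p ∘ Φ ∘ α_p⁻¹)(a) is a Herz-Schur (A,G,α)-multiplier with ||S_{h_F}||_cb ≤ |F| · ||Φ||_cb. Moreover, if Φ is completely positive then h_F is a completely positive Herz-Schur (A,G,α)-multiplier. -/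
noncomputable section
open scoped ComplexOrder ENNReal
open Matrix

namespace HFAux
set_option linter.unusedSectionVars false

section mat
variable {K : Type*} [NormedAddCommGroup K] [InnerProductSpace ℂ K] [CompleteSpace K]
variable {A : Type*} [NonUnitalCStarAlgebra A] {ν : Type*} [Fintype ν]

lemma matOp_apply (M : Matrix ν ν (K →L[ℂ] K)) (ξ : PiLp 2 (fun _ : ν => K)) (i : ν) :
    matOp M ξ i = ∑ j, M i j (ξ j) := by
  simp [matOp]

lemma inner_matOp (M : Matrix ν ν (K →L[ℂ] K)) (ξ η : PiLp 2 (fun _ : ν => K)) :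
    inner ℂ η (matOp M ξ) = ∑ i, ∑ j, inner ℂ (η i) (M i j (ξ j)) := by
  rw [PiLp.inner_apply]
  refine Finset.sum_congr rfl fun i _ => ?_
  rw [matOp_apply, inner_sum]

/-- Amplification of a representation. -/
def matHom (ν : Type*) [Fintype ν] (ρ : A →⋆ₙₐ[ℂ] (K →L[ℂ] K)) :
    CStarMatrix ν ν A →⋆ₙₐ[ℂ]
      (PiLp 2 (fun _ : ν => K) →L[ℂ] PiLp 2 (fun _ : ν => K)) where
  toFun M := matOp (Matrix.of fun i j => ρ (M i j))
  map_smul' c M := by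
    ext ξ i
    simp [matOp_apply, Finset.smul_sum]
  map_zero' := by
    ext ξ i
    simp [matOp_apply]
  map_add' M N := by
    ext ξ i
    simp [matOp_apply, Finset.sum_add_distrib]
  map_mul' M N := by
    ext ξ i
    change _ = matOp _ (matOp _ ξ) i
    simp only [matOp_apply, CStarMatrix.mul_apply, Matrix.of_apply,
      map_sum, map_mul, _root_.sum_apply]
    rw [Finset.sum_comm]
    rfl
  map_star' M := by
    rw [ContinuousLinearMap.star_eq_adjoint, ContinuousLinearMap.eq_adjoint_iff]
    intro ξ η
    rw [← inner_conj_symm, inner_matOp, inner_matOp, map_sum]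
    simp only [map_sum]
    rw [Finset.sum_comm]
    refine Finset.sum_congr rfl fun i _ => Finset.sum_congr rfl fun j _ => ?_
    rw [inner_conj_symm]
    simp [CStarMatrix.star_apply, map_star, ContinuousLinearMap.star_eq_adjoint,
      ContinuousLinearMap.adjoint_inner_left]

lemma matHom_apply (ρ : A →⋆ₙₐ[ℂ] (K →L[ℂ] K)) (M : CStarMatrix ν ν A) :
    matHom ν ρ M = matOp (Matrix.of fun i j => ρ (M i j)) := rfl

lemma matHom_injective (ρ : A →⋆ₙₐ[ℂ] (K →L[ℂ] K)) (hρ : Function.Injective ρ) :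
    Function.Injective (matHom ν ρ) := by
  classical
  intro M N h
  ext i j
  apply hρ
  ext v
  have := congrArg (fun T => T (WithLp.toLp 2 (Pi.single j v)) i) h
  simp only [matHom_apply, matOp_apply] at this
  rw [Finset.sum_eq_single j, Finset.sum_eq_single j] at this
  · simpa using this
  all_goals simp +contextual

/-- positivity is reflected by injective homs -/
lemma reflect_pos {B C : Type*} [NonUnitalCStarAlgebra B] [PartialOrder B] [StarOrderedRing B]
    [NonUnitalCStarAlgebra C] [PartialOrder C] [StarOrderedRing C]
    (φ : B →⋆ₙₐ[ℂ] C) (hφ : Function.Injective φ) (b : B) (hb : 0 ≤ φ b) :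
    ∃ c, b = star c * c := by
  rw [← CStarAlgebra.nonneg_iff_eq_star_mul_self]
  have hsa : IsSelfAdjoint b := by
    have := IsSelfAdjoint.of_nonneg hb
    rw [IsSelfAdjoint, ← map_star] at this
    exact hφ this
  refine (CStarAlgebra.nonneg_iff_isSelfAdjoint_and_negPart_eq_zero).2 ⟨hsa, ?_⟩
  apply hφ
  rw [map_zero, ← ((CStarAlgebra.nonneg_iff_isSelfAdjoint_and_negPart_eq_zero).1 hb).2]
  rw [CFC.negPart_def, CFC.negPart_def]
  have hc : Continuous φ := (NonUnitalStarAlgHom.isometry φ hφ).continuous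
  exact NonUnitalStarAlgHomClass.map_cfcₙ φ (fun x : ℝ => x⁻) b (by fun_prop) (by simp) hc hsa
    (hsa.map φ)

lemma matPos_of_nonneg (ρ : A →⋆ₙₐ[ℂ] (K →L[ℂ] K)) (hρ : Function.Injective ρ)
    (M : Matrix ν ν A) (h : 0 ≤ matOp (Matrix.of fun i j => ρ (M i j))) : MatPos M := by
  let _ := CStarAlgebra.spectralOrder A
  have := CStarAlgebra.spectralOrderedRing A
  exact reflect_pos (matHom ν ρ) (matHom_injective ρ hρ) (CStarMatrix.ofMatrix M) h

lemma norm_matOp_le {L : Type*} [NormedAddCommGroup L] [InnerProductSpace ℂ L] [CompleteSpace L]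
    (ρ : A →⋆ₙₐ[ℂ] (K →L[ℂ] K)) (hρ : Function.Injective ρ)
    (σ : A →⋆ₙₐ[ℂ] (L →L[ℂ] L)) (M : Matrix ν ν A) :
    ‖matOp (Matrix.of fun i j => σ (M i j))‖ ≤ ‖matOp (Matrix.of fun i j => ρ (M i j))‖ := by
  let _ := CStarAlgebra.spectralOrder A
  have := CStarAlgebra.spectralOrderedRing A
  have h1 := NonUnitalStarAlgHom.norm_map (matHom ν ρ) (matHom_injective ρ hρ)
    (CStarMatrix.ofMatrix M)
  have h2 := NonUnitalStarAlgHom.norm_apply_le (matHom ν σ) (CStarMatrix.ofMatrix M)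
  rw [← h1] at h2
  exact h2

lemma norm_matOp_reindex {μ : Type*} [Fintype μ] (e : ν ≃ μ)
    (ρ : A →⋆ₙₐ[ℂ] (K →L[ℂ] K)) (hρ : Function.Injective ρ) (M : Matrix ν ν A) :
    ‖matOp (Matrix.of fun i j => ρ (M (e.symm i) (e.symm j)))‖
      = ‖matOp (Matrix.of fun i j => ρ (M i j))‖ := by
  let _ := CStarAlgebra.spectralOrder A
  have := CStarAlgebra.spectralOrderedRing A
  have h1 := NonUnitalStarAlgHom.norm_map (matHom ν ρ) (matHom_injective ρ hρ)
    (CStarMatrix.ofMatrix M)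
  have h2 := NonUnitalStarAlgHom.norm_map (matHom μ ρ) (matHom_injective ρ hρ)
    (CStarMatrix.reindexₐ ℂ A e (CStarMatrix.ofMatrix M))
  have h3 := StarAlgEquiv.norm_map (CStarMatrix.reindexₐ ℂ A e) (CStarMatrix.ofMatrix M)
  rw [h3, ← h1] at h2
  exact h2

lemma matPos_reindex {μ : Type*} [Fintype μ] {R : Type*} [NonUnitalSemiring R] [StarRing R]
    (e : ν ≃ μ) (M : Matrix ν ν R) (h : MatPos M) :
    MatPos (M.submatrix e.symm e.symm) := by
  obtain ⟨N, rfl⟩ := h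
  refine ⟨N.submatrix e.symm e.symm, ?_⟩
  rw [Matrix.conjTranspose_submatrix, Matrix.submatrix_mul_equiv]

lemma nonneg_iff_star {C : Type*} [NonUnitalCStarAlgebra C] [PartialOrder C] [StarOrderedRing C]
    {c : C} : 0 ≤ c ↔ ∃ b, c = star b * b :=
  CStarAlgebra.nonneg_iff_eq_star_mul_self

/-- sums of Gram matrices are positive -/
lemma matPos_gram {B : Type*} [NonUnitalCStarAlgebra B] {κ : Type*} [Fintype κ] (X : κ → ν → B) :
    MatPos (Matrix.of fun i j => ∑ k, star (X k i) * X k j) := by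
  classical
  let _ := CStarAlgebra.spectralOrder B
  have := CStarAlgebra.spectralOrderedRing B
  have key : ∀ k, 0 ≤ (CStarMatrix.ofMatrix (Matrix.of fun i j => star (X k i) * X k j) :
      CStarMatrix ν ν B) := by
    intro k
    rcases isEmpty_or_nonempty ν with h | ⟨⟨i0⟩⟩
    · apply le_of_eq; ext i; exact h.elim i
    · rw [nonneg_iff_star]
      refine ⟨CStarMatrix.ofMatrix (Matrix.of fun i j => if i = i0 then X k j else 0), ?_⟩
      ext1 i j
      rw [CStarMatrix.mul_apply, Finset.sum_eq_single i0]
      · simp [CStarMatrix.star_apply]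
      · intro b _ hb; simp [hb]
      · simp
  have h2 : 0 ≤ ∑ k, (CStarMatrix.ofMatrix (Matrix.of fun i j => star (X k i) * X k j) :
      CStarMatrix ν ν B) := Finset.sum_nonneg fun k _ => key k
  rw [nonneg_iff_star] at h2
  obtain ⟨N, hN⟩ := h2
  refine ⟨CStarMatrix.ofMatrix.symm N, ?_⟩
  have h3 : (Matrix.of fun i j => ∑ k, star (X k i) * X k j)
      = ∑ k, (Matrix.of fun i j => star (X k i) * X k j) := by
    ext1 i j
    simp [Matrix.sum_apply]
  rw [h3]
  exact hN

end mat
section ops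
variable {H : Type*} [NormedAddCommGroup H] [InnerProductSpace ℂ H] [CompleteSpace H]
variable {A : Type*} [NonUnitalCStarAlgebra A] {G : Type*} [Group G]

open Classical in
lemma lpSingle_eq (x : G) (v : H) :
    (lpSingle x v : lp (fun _ : G => H) 2) = lp.single 2 x v := rfl

lemma inner_lpSingle (x : G) (v : H) (f : lp (fun _ : G => H) 2) :
    inner ℂ (lpSingle x v : lp (fun _ : G => H) 2) f = inner ℂ v (f x) := by
  classical
  rw [lpSingle_eq]
  exact lp.inner_single_left (𝕜 := ℂ) (G := fun _ : G => H) x v f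

lemma lpSingle_self (x : G) (v : H) : (lpSingle x v : lp (fun _ : G => H) 2) x = v := by
  classical
  rw [lpSingle_eq]
  exact lp.single_apply_self (E := fun _ : G => H) 2 x v

lemma lpSingle_ne (x y : G) (h : y ≠ x) (v : H) :
    (lpSingle x v : lp (fun _ : G => H) 2) y = 0 := by
  classical
  rw [lpSingle_eq]
  exact lp.single_apply_ne (E := fun _ : G => H) 2 x v h

lemma lam_apply (t s : G) (f : lp (fun _ : G => H) 2) : lam t f s = f (t⁻¹ * s) := rfl

lemma piRep_apply (ι : A →⋆ₙₐ[ℂ] (H →L[ℂ] H)) (α : G → A ≃⋆ₐ[ℂ] A) (a : A) (s : G)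
    (f : lp (fun _ : G => H) 2) : piRep ι α a f s = ι (α s⁻¹ a) (f s) := rfl

lemma lam_mul (s t : G) : (lam s * lam t :
    lp (fun _ : G => H) 2 →L[ℂ] lp (fun _ : G => H) 2) = lam (s * t) := by
  ext f r
  change f (t⁻¹ * (s⁻¹ * r)) = f ((s * t)⁻¹ * r)
  rw [_root_.mul_inv_rev, mul_assoc]

lemma inner_lam (t : G) (f g : lp (fun _ : G => H) 2) :
    inner ℂ f (lam t g) = inner ℂ (lam t⁻¹ f) g := by
  rw [lp.inner_eq_tsum, lp.inner_eq_tsum, ← (Equiv.mulLeft t).tsum_eq]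
  simp [lam_apply]

lemma norm_lam_le (t : G) (f : lp (fun _ : G => H) 2) : ‖lam t f‖ ≤ ‖f‖ := by
  have h : (inner ℂ (lam t f) (lam t f) : ℂ) = inner ℂ f f := by
    rw [inner_lam]
    congr 1
    ext s
    simp [lam_apply]
  rw [inner_self_eq_norm_sq_to_K, inner_self_eq_norm_sq_to_K] at h
  have h2 : ‖lam t f‖ ^ 2 = ‖f‖ ^ 2 := by exact_mod_cast h
  exact ((sq_eq_sq₀ (norm_nonneg _) (norm_nonneg _)).1 h2).le

lemma star_lam (t : G) : star (lam t : lp (fun _ : G => H) 2 →L[ℂ] lp (fun _ : G => H) 2)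
    = lam t⁻¹ := by
  symm
  rw [ContinuousLinearMap.star_eq_adjoint, ContinuousLinearMap.eq_adjoint_iff]
  intro f g
  rw [inner_lam]

/-- `piRep` as a star homomorphism. -/
def piHom (ι : A →⋆ₙₐ[ℂ] (H →L[ℂ] H)) (α : G → A ≃⋆ₐ[ℂ] A) :
    A →⋆ₙₐ[ℂ] (lp (fun _ : G => H) 2 →L[ℂ] lp (fun _ : G => H) 2) where
  toFun := piRep ι α
  map_smul' c a := (piRepLin ι α).map_smul c a
  map_zero' := (piRepLin ι α).map_zero
  map_add' a b := (piRepLin ι α).map_add a b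
  map_mul' a b := by
    ext f s
    change ι (α s⁻¹ (a * b)) (f s) = ι (α s⁻¹ a) (ι (α s⁻¹ b) (f s))
    rw [map_mul, map_mul]; rfl
  map_star' a := by
    rw [ContinuousLinearMap.star_eq_adjoint, ContinuousLinearMap.eq_adjoint_iff]
    intro f g
    rw [lp.inner_eq_tsum, lp.inner_eq_tsum]
    refine tsum_congr fun s => ?_
    rw [piRep_apply, piRep_apply, map_star, map_star, ContinuousLinearMap.star_eq_adjoint,
      ContinuousLinearMap.adjoint_inner_left]

lemma piHom_apply (ι : A →⋆ₙₐ[ℂ] (H →L[ℂ] H)) (α : G → A ≃⋆ₐ[ℂ] A) (a : A) :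
    piHom ι α a = piRep ι α a := rfl

lemma lam_piHom (ι : A →⋆ₙₐ[ℂ] (H →L[ℂ] H)) (α : G → A ≃⋆ₐ[ℂ] A) (hα : IsAction α) (p : G)
    (a : A) : lam p * piHom ι α a = piHom ι α (α p a) * lam p := by
  ext f s
  change ι (α (p⁻¹ * s)⁻¹ a) (f (p⁻¹ * s)) = ι (α s⁻¹ (α p a)) (f (p⁻¹ * s))
  rw [← hα.2, _root_.mul_inv_rev, inv_inv]

/-- matrix entry -/
def ent (p q : G) : (lp (fun _ : G => H) 2 →L[ℂ] lp (fun _ : G => H) 2) →ₗ[ℂ] (H →L[ℂ] H) where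
  toFun x := lpEval p ∘L x ∘L lpSingle q
  map_add' x y := by ext v; rfl
  map_smul' c x := by ext v; rfl

lemma ent_apply (p q : G) (x : lp (fun _ : G => H) 2 →L[ℂ] lp (fun _ : G => H) 2) (v : H) :
    ent p q x v = x (lpSingle q v) p := rfl

lemma ent_gen (ι : A →⋆ₙₐ[ℂ] (H →L[ℂ] H)) (α : G → A ≃⋆ₐ[ℂ] A) [DecidableEq G] (p q s : G) (a : A) :
    ent p q (piRep ι α a * lam s) = ι (if s⁻¹ * p = q then α p⁻¹ a else 0) := by
  ext v
  change ι (α p⁻¹ a) ((lpSingle q v : lp (fun _ : G => H) 2) (s⁻¹ * p)) = _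
  split_ifs with h
  · rw [h, lpSingle_self]
  · rw [lpSingle_ne _ _ h]; simp

lemma continuous_ent (p q : G) : Continuous (ent (H := H) p q) := by
  change Continuous fun x => lpEval p ∘L x ∘L lpSingle q
  fun_prop

lemma ent_mem (ι : A →⋆ₙₐ[ℂ] (H →L[ℂ] H)) (hisom : ∀ a : A, ‖ι a‖ = ‖a‖)
    (α : G → A ≃⋆ₐ[ℂ] A) (p q : G) (x : lp (fun _ : G => H) 2 →L[ℂ] lp (fun _ : G => H) 2)
    (hx : x ∈ CrossedSet ι α) : ∃ a, ι a = ent p q x := by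
  classical
  have hcl : IsClosed (Set.range ι) :=
    (AddMonoidHomClass.isometry_of_norm ι hisom).isClosedEmbedding.isClosed_range
  have hsub : (Submodule.span ℂ
    {x | ∃ (a : A) (t : G), x = piRep ι α a * lam t} : Set _) ⊆ ent p q ⁻¹' (Set.range ι) := by
    have : Submodule.span ℂ {x | ∃ (a : A) (t : G), x = piRep ι α a * lam t}
        ≤ (LinearMap.range (iotaLin ι)).comap (ent p q) := by
      rw [Submodule.span_le]
      rintro _ ⟨a, t, rfl⟩
      exact ⟨_, (ent_gen ι α p q t a).symm⟩
    exact this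
  exact closure_minimal hsub (hcl.preimage (continuous_ent p q)) hx

lemma opNorm_le_of_inner {K : Type*} [NormedAddCommGroup K] [InnerProductSpace ℂ K]
    (T : K →L[ℂ] K) (C : ℝ) (hC : 0 ≤ C)
    (h : ∀ ξ η, ‖(inner ℂ η (T ξ) : ℂ)‖ ≤ C * ‖η‖ * ‖ξ‖) : ‖T‖ ≤ C := by
  refine T.opNorm_le_bound hC fun ξ => ?_
  have := h ξ (T ξ)
  rw [inner_self_eq_norm_sq_to_K] at this
  rcases eq_or_ne ‖T ξ‖ 0 with h0 | h0
  · rw [h0]; positivity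
  · have hp : 0 < ‖T ξ‖ := lt_of_le_of_ne (norm_nonneg _) h0.symm
    simp at this
    nlinarith

variable {n : ℕ} (Fs : Finset G)

/-- the isometry -/
def W (ξ : PiLp 2 (fun _ : Fin n × Fs => H)) : PiLp 2 (fun _ : Fin n => lp (fun _ : G => H) 2) :=
  WithLp.toLp 2 fun j => ∑ q : Fs, lpSingle (q : G) (ξ (j, q))

/-- the row of translations -/
def V (ξ : PiLp 2 (fun _ : Fin n => lp (fun _ : G => H) 2)) :
    PiLp 2 (fun _ : Fin n × Fs => lp (fun _ : G => H) 2) :=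
  WithLp.toLp 2 fun u => lam (u.2 : G)⁻¹ (ξ u.1)

lemma norm_W (ξ : PiLp 2 (fun _ : Fin n × Fs => H)) : ‖W Fs ξ‖ = ‖ξ‖ := by
  classical
  have : (inner ℂ (W Fs ξ) (W Fs ξ) : ℂ) = inner ℂ ξ ξ := by
    rw [PiLp.inner_apply, PiLp.inner_apply, Fintype.sum_prod_type]
    refine Finset.sum_congr rfl fun j _ => ?_
    simp only [W, sum_inner, inner_sum, inner_lpSingle]
    refine Finset.sum_congr rfl fun q _ => ?_
    rw [Finset.sum_eq_single q]
    · rw [lpSingle_self]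
    · intro b _ hb
      rw [lpSingle_ne _ _ (fun h => hb (Subtype.ext h)), inner_zero_right]
    · simp
  rw [inner_self_eq_norm_sq_to_K, inner_self_eq_norm_sq_to_K] at this
  have h2 : ‖W Fs ξ‖ ^ 2 = ‖ξ‖ ^ 2 := by exact_mod_cast this
  exact (sq_eq_sq₀ (norm_nonneg _) (norm_nonneg _)).1 h2

lemma norm_V (ξ : PiLp 2 (fun _ : Fin n => lp (fun _ : G => H) 2)) :
    ‖V Fs ξ‖ ^ 2 ≤ Fs.card * ‖ξ‖ ^ 2 := by
  rw [PiLp.norm_sq_eq_of_L2, PiLp.norm_sq_eq_of_L2, Fintype.sum_prod_type, Finset.mul_sum]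
  refine Finset.sum_le_sum fun j _ => ?_
  calc ∑ q : Fs, ‖V Fs ξ (j, q)‖ ^ 2 ≤ ∑ q : Fs, ‖ξ j‖ ^ 2 :=
        Finset.sum_le_sum fun q _ =>
          pow_le_pow_left₀ (norm_nonneg _) (norm_lam_le _ _) 2
    _ = _ := by simp

lemma inner_W (M : Matrix (Fin n) (Fin n) (lp (fun _ : G => H) 2 →L[ℂ] lp (fun _ : G => H) 2))
    (ξ η : PiLp 2 (fun _ : Fin n × Fs => H)) :
    inner ℂ η (matOp (Matrix.of fun u v : Fin n × Fs => ent (u.2 : G) v.2 (M u.1 v.1)) ξ)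
      = inner ℂ (W Fs η) (matOp M (W Fs ξ)) := by
  rw [inner_matOp, inner_matOp, Fintype.sum_prod_type]
  simp only [Fintype.sum_prod_type, W, sum_inner, inner_sum, inner_lpSingle, map_sum,
    Matrix.of_apply, ent_apply]
  refine Finset.sum_congr rfl fun i _ => ?_
  rw [Finset.sum_comm]
  refine Finset.sum_congr rfl fun j _ => ?_
  first | rfl | exact Finset.sum_comm

lemma inner_V (b : Matrix (Fin n × Fs) (Fin n × Fs)
      (lp (fun _ : G => H) 2 →L[ℂ] lp (fun _ : G => H) 2))
    (ξ η : PiLp 2 (fun _ : Fin n => lp (fun _ : G => H) 2)) :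
    inner ℂ η (matOp (Matrix.of fun i j : Fin n =>
        ∑ p : Fs, ∑ q : Fs, lam (p : G) * b (i, p) (j, q) * lam (q : G)⁻¹) ξ)
      = inner ℂ (V Fs η) (matOp b (V Fs ξ)) := by
  rw [inner_matOp, inner_matOp, Fintype.sum_prod_type]
  simp only [Fintype.sum_prod_type, V, inner_sum, Matrix.of_apply, _root_.sum_apply]
  refine Finset.sum_congr rfl fun i _ => ?_
  rw [Finset.sum_comm]
  refine Finset.sum_congr rfl fun p _ => Finset.sum_congr rfl fun j _ =>
    Finset.sum_congr rfl fun q _ => ?_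
  exact inner_lam _ _ _

end ops
section main
variable {H : Type*} [NormedAddCommGroup H] [InnerProductSpace ℂ H] [CompleteSpace H]
variable {A : Type*} [NonUnitalCStarAlgebra A] {G : Type*} [Group G]

/-- The multiplier map. -/
def PsiMap (ι : A →⋆ₙₐ[ℂ] (H →L[ℂ] H)) (α : G → A ≃⋆ₐ[ℂ] A) (Fs : Finset G) (Φ : A →ₗ[ℂ] A)
    (J : (H →L[ℂ] H) →ₗ[ℂ] A) :
    (lp (fun _ : G => H) 2 →L[ℂ] lp (fun _ : G => H) 2) →ₗ[ℂ]
      (lp (fun _ : G => H) 2 →L[ℂ] lp (fun _ : G => H) 2) where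
  toFun x := ∑ p : Fs, ∑ q : Fs,
    lam (p : G) * piHom ι α (Φ (J (ent (p : G) (q : G) x))) * lam (q : G)⁻¹
  map_add' x y := by
    simp only [map_add, mul_add, add_mul, Finset.sum_add_distrib]
  map_smul' c x := by
    simp only [map_smul, mul_smul_comm, smul_mul_assoc, Finset.smul_sum, RingHom.id_apply]

lemma PsiMap_apply (ι : A →⋆ₙₐ[ℂ] (H →L[ℂ] H)) (α : G → A ≃⋆ₐ[ℂ] A) (Fs : Finset G)
    (Φ : A →ₗ[ℂ] A) (J : (H →L[ℂ] H) →ₗ[ℂ] A)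
    (x : lp (fun _ : G => H) 2 →L[ℂ] lp (fun _ : G => H) 2) :
    PsiMap ι α Fs Φ J x = ∑ p : Fs, ∑ q : Fs,
    lam (p : G) * piHom ι α (Φ (J (ent (p : G) (q : G) x))) * lam (q : G)⁻¹ := rfl

lemma PsiMap_mem (ι : A →⋆ₙₐ[ℂ] (H →L[ℂ] H)) (α : G → A ≃⋆ₐ[ℂ] A) (hα : IsAction α)
    (Fs : Finset G) (Φ : A →ₗ[ℂ] A) (J : (H →L[ℂ] H) →ₗ[ℂ] A)
    (x : lp (fun _ : G => H) 2 →L[ℂ] lp (fun _ : G => H) 2) :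
    PsiMap ι α Fs Φ J x ∈ CrossedSet ι α := by
  rw [PsiMap_apply]
  apply subset_closure
  refine Submodule.sum_mem _ fun p _ => Submodule.sum_mem _ fun q _ => ?_
  apply Submodule.subset_span
  rw [lam_piHom ι α hα, mul_assoc, lam_mul]
  exact ⟨_, _, rfl⟩

lemma PsiMap_gen [DecidableEq G] (ι : A →⋆ₙₐ[ℂ] (H →L[ℂ] H)) (α : G → A ≃⋆ₐ[ℂ] A)
    (hα : IsAction α) (Fs : Finset G) (Φ : A →ₗ[ℂ] A) (J : (H →L[ℂ] H) →ₗ[ℂ] A)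
    (hJ : ∀ a, J (ι a) = a) :
    HSGenProp ι α (fun s : G => ∑ p ∈ Fs ∩ Fs.image (fun q => s * q),
          autLin (α p) ∘ₗ Φ ∘ₗ autLin (α p⁻¹)) (PsiMap ι α Fs Φ J) := by
  intro a s
  rw [PsiMap_apply]
  have key : ∀ p q : G, lam p * piHom ι α (Φ (J (ent p q (piRep ι α a * lam s)))) * lam q⁻¹
      = if s⁻¹ * p = q then piHom ι α (α p (Φ (α p⁻¹ a))) * lam s else 0 := by
    intro p q
    rw [ent_gen, hJ, lam_piHom ι α hα, mul_assoc, lam_mul]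
    split_ifs with h
    · subst h
      simp
    · simp
  simp only [key]
  rw [Finset.sum_coe_sort Fs (fun p => ∑ q : Fs,
    if s⁻¹ * p = (q : G) then piHom ι α (α p (Φ (α p⁻¹ a))) * lam s else 0)]
  have hs : Fs ∩ Fs.image (fun q => s * q) = Fs.filter (fun p => s⁻¹ * p ∈ Fs) := by
    ext p
    simp only [Finset.mem_inter, Finset.mem_image, Finset.mem_filter]
    refine and_congr_right fun _ => ⟨?_, fun h => ⟨_, h, by simp⟩⟩
    rintro ⟨q, hq, rfl⟩
    simpa using hq
  rw [hs, ← piHom_apply]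
  simp only [LinearMap.sum_apply, map_sum, Finset.sum_mul]
  rw [Finset.sum_filter]
  refine Finset.sum_congr rfl fun p _ => ?_
  rw [Finset.sum_coe_sort Fs (fun q =>
    if s⁻¹ * p = q then piHom ι α (α p (Φ (α p⁻¹ a))) * lam s else 0), Finset.sum_ite_eq]
  rfl

lemma cb_general (ι : A →⋆ₙₐ[ℂ] (H →L[ℂ] H)) (hι : Function.Injective ι) (Φ : A →ₗ[ℂ] A) (C : ℝ)
    (h : CBBound (fun a => ι a) (fun a => ι a) Φ C) {ν : Type*} [Fintype ν] (M : Matrix ν ν A) :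
    ‖matOp (Matrix.of fun i j => ι (Φ (M i j)))‖ ≤ C * ‖matOp (Matrix.of fun i j => ι (M i j))‖ := by
  have e := Fintype.equivFin ν
  have := h _ (M.submatrix e.symm e.symm)
  have h1 := norm_matOp_reindex e ι hι M
  have h2 := norm_matOp_reindex e ι hι (M.map Φ)
  rw [← h1]
  refine le_trans (le_of_eq ?_) this
  exact h2.symm

lemma cp_general (Φ : A →ₗ[ℂ] A) (h : IsCompletelyPositive Φ) {ν : Type*} [Fintype ν]
    (M : Matrix ν ν A) (hM : MatPos M) : MatPos (M.map Φ) := by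
  have e := Fintype.equivFin ν
  have := matPos_reindex e.symm _ (h _ _ (matPos_reindex e _ hM))
  convert this
  ext i j
  simp

lemma PsiMap_cb (ι : A →⋆ₙₐ[ℂ] (H →L[ℂ] H)) (hisom : ∀ a : A, ‖ι a‖ = ‖a‖)
    (α : G → A ≃⋆ₐ[ℂ] A) (Fs : Finset G) (Φ : A →ₗ[ℂ] A) (J : (H →L[ℂ] H) →ₗ[ℂ] A)
    (hJ : ∀ a, J (ι a) = a) (C : ℝ) (hC : 0 ≤ C)
    (h : CBBound (fun a => ι a) (fun a => ι a) Φ C) :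
    CBBoundOnCrossed ι α (PsiMap ι α Fs Φ J) (Fs.card * C) := by
  intro n M hM
  have hι : Function.Injective ι := (AddMonoidHomClass.isometry_of_norm ι hisom).injective
  let a : Matrix (Fin n × Fs) (Fin n × Fs) A :=
    Matrix.of fun u v => J (ent (u.2 : G) (v.2 : G) (M u.1 v.1))
  have ha : ∀ u v, ι (a u v) = ent (u.2 : G) (v.2 : G) (M u.1 v.1) := by
    intro u v
    obtain ⟨c, hc⟩ := ent_mem ι hisom α (u.2 : G) (v.2 : G) _ (hM u.1 v.1)
    change ι (J _) = _
    rw [← hc, hJ]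
  have h1 : ‖matOp (Matrix.of fun u v => ι (a u v))‖ ≤ ‖matOp M‖ := by
    simp only [ha]
    refine opNorm_le_of_inner _ _ (norm_nonneg _) fun ξ η => ?_
    rw [inner_W]
    refine (norm_inner_le_norm _ _).trans ?_
    rw [norm_W, mul_comm ‖matOp M‖, mul_assoc, ← norm_W Fs ξ]
    gcongr
    exact (matOp M).le_opNorm _
  have h2 := cb_general ι hι Φ C h a
  have h3 := norm_matOp_le ι hι (piHom ι α) (a.map Φ)
  simp only [Matrix.map_apply] at h3
  have h4 : ‖matOp (Matrix.of fun u v => piHom ι α (Φ (a u v)))‖ ≤ C * ‖matOp M‖ :=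
    h3.trans (h2.trans (mul_le_mul_of_nonneg_left h1 hC))
  refine opNorm_le_of_inner _ _ (by positivity) fun ξ η => ?_
  have h5 := inner_V Fs (Matrix.of fun u v => piHom ι α (Φ (a u v))) ξ η
  have h6 : (inner ℂ η (matOp (M.map (PsiMap ι α Fs Φ J)) ξ) : ℂ)
    = inner ℂ (V Fs η) (matOp (Matrix.of fun u v => piHom ι α (Φ (a u v))) (V Fs ξ)) := h5
  rw [h6]
  have h7 : ‖V Fs η‖ * ‖V Fs ξ‖ ≤ Fs.card * (‖η‖ * ‖ξ‖) := by
    refine abs_le_of_sq_le_sq' ?_ (by positivity) |>.2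
    have := mul_le_mul (norm_V Fs η) (norm_V Fs ξ) (by positivity) (by positivity)
    nlinarith
  calc _ ≤ ‖V Fs η‖ * (C * ‖matOp M‖ * ‖V Fs ξ‖) :=
        (norm_inner_le_norm _ _).trans (mul_le_mul_of_nonneg_left
          (ContinuousLinearMap.le_of_opNorm_le _ h4 _) (norm_nonneg _))
    _ = C * ‖matOp M‖ * (‖V Fs η‖ * ‖V Fs ξ‖) := by ring
    _ ≤ C * ‖matOp M‖ * (Fs.card * (‖η‖ * ‖ξ‖)) := by gcongr
    _ = _ := by ring

lemma PsiMap_cp (ι : A →⋆ₙₐ[ℂ] (H →L[ℂ] H)) (hisom : ∀ a : A, ‖ι a‖ = ‖a‖)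
    (α : G → A ≃⋆ₐ[ℂ] A) (hα : IsAction α) (Fs : Finset G) (Φ : A →ₗ[ℂ] A)
    (J : (H →L[ℂ] H) →ₗ[ℂ] A)
    (hJ : ∀ a, J (ι a) = a) (h : IsCompletelyPositive Φ) :
    CPOnCrossed ι α (PsiMap ι α Fs Φ J) := by
  refine ⟨fun x _ => PsiMap_mem ι α hα Fs Φ J x, ?_⟩
  intro n M hM hpos
  have hι : Function.Injective ι := (AddMonoidHomClass.isometry_of_norm ι hisom).injective
  let a : Matrix (Fin n × Fs) (Fin n × Fs) A :=
    Matrix.of fun u v => J (ent (u.2 : G) (v.2 : G) (M u.1 v.1))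
  have ha : ∀ u v, ι (a u v) = ent (u.2 : G) (v.2 : G) (M u.1 v.1) := by
    intro u v
    obtain ⟨c, hc⟩ := ent_mem ι hisom α (u.2 : G) (v.2 : G) _ (hM u.1 v.1)
    change ι (J _) = _
    rw [← hc, hJ]
  have hM0 : 0 ≤ matOp M := by
    obtain ⟨N, rfl⟩ := hpos
    have h1 := (matHom (Fin n) (NonUnitalStarAlgHom.id ℂ
      (lp (fun _ : G => H) 2 →L[ℂ] lp (fun _ : G => H) 2))).map_mul'
      (star (CStarMatrix.ofMatrix N)) (CStarMatrix.ofMatrix N)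
    have h2 := (matHom (Fin n) (NonUnitalStarAlgHom.id ℂ
      (lp (fun _ : G => H) 2 →L[ℂ] lp (fun _ : G => H) 2))).map_star'
      (CStarMatrix.ofMatrix N)
    have h3 : matOp (Nᴴ * N) = star (matOp N) * matOp N := by
      refine Eq.trans h1 ?_
      exact congrArg (· * matOp N) h2
    rw [h3]
    exact star_mul_self_nonneg _
  have hpa : MatPos a := by
    refine matPos_of_nonneg ι hι a ?_
    simp only [ha]
    rw [ContinuousLinearMap.nonneg_iff_isPositive] at hM0 ⊢
    rw [ContinuousLinearMap.isPositive_iff_complex] at hM0 ⊢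
    intro ξ
    have h1 := hM0 (W Fs ξ)
    rw [← inner_conj_symm, ← inner_W, inner_conj_symm] at h1
    exact h1
  obtain ⟨N, hN⟩ := cp_general Φ h a hpa
  have hN' : ∀ u v, Φ (a u v) = ∑ k, star (N k u) * N k v := by
    intro u v
    have := congrFun (congrFun hN u) v
    simpa [Matrix.mul_apply] using this
  have hg := matPos_gram (fun (k : Fin n × Fs) (j : Fin n) =>
    ∑ q : Fs, piHom ι α (N k (j, q)) * lam (q : G)⁻¹)
  have heq : M.map (PsiMap ι α Fs Φ J) = Matrix.of fun i j => ∑ k : Fin n × Fs,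
      star (∑ q : Fs, piHom ι α (N k (i, q)) * lam (q : G)⁻¹) *
        ∑ q : Fs, piHom ι α (N k (j, q)) * lam (q : G)⁻¹ := by
    apply Matrix.ext
    intro i j
    rw [Matrix.map_apply, PsiMap_apply, Matrix.of_apply]
    have e1 : ∀ p q : Fs, J (ent (p : G) (q : G) (M i j)) = a (i, p) (j, q) := fun _ _ => rfl
    simp only [e1, hN', star_sum, Finset.sum_mul_sum]
    rw [Finset.sum_comm]
    simp only [map_sum, Finset.mul_sum, Finset.sum_mul]
    rw [Finset.sum_comm]
    symm
    rw [Finset.sum_comm]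
    refine Finset.sum_congr rfl fun p _ => ?_
    rw [Finset.sum_comm]
    refine Finset.sum_congr rfl fun q _ => Finset.sum_congr rfl fun k _ => ?_
    rw [star_mul, star_lam, inv_inv, map_mul, map_star]
    simp only [mul_assoc]
  rw [heq]
  exact hg

end main
end HFAux

/-- **Proposition 2.10.** Let `F ⊆ G` be finite and `Φ ∈ CB(A)`.  The map
`h_F(s)(a) = Σ_{p ∈ F ∩ sF} (α_p ∘ Φ ∘ α_p⁻¹)(a)` is a Herz-Schur `(A,G,α)`-multiplier
with `‖S_{h_F}‖_cb ≤ |F| ⬝ ‖Φ‖_cb`; moreover, if `Φ` is completely positive then `h_F`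
is a completely positive Herz-Schur `(A,G,α)`-multiplier. -/
theorem hF_is_herzSchur_multiplier
    {H : Type*} [NormedAddCommGroup H] [InnerProductSpace ℂ H] [CompleteSpace H]
    {A : Type*} [NonUnitalCStarAlgebra A] {G : Type*} [Group G] [DecidableEq G]
    (ι : A →⋆ₙₐ[ℂ] (H →L[ℂ] H)) (hisom : ∀ a : A, ‖ι a‖ = ‖a‖)
    (hnd : NondegenerateRep ι)
    (α : G → A ≃⋆ₐ[ℂ] A) (hα : IsAction α)
    (Fs : Finset G) (Φ : A →ₗ[ℂ] A)
    (hΦcb : ∃ C : ℝ, 0 ≤ C ∧ CBBound (fun a => ι a) (fun a => ι a) Φ C) :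
    (∃ Ψ, HSGenProp ι α
        (fun s : G => ∑ p ∈ Fs ∩ Fs.image (fun q => s * q),
          autLin (α p) ∘ₗ Φ ∘ₗ autLin (α p⁻¹)) Ψ ∧
      (∀ x ∈ CrossedSet ι α, Ψ x ∈ CrossedSet ι α) ∧
      CBBoundOnCrossed ι α Ψ
        ((Fs.card : ℝ) * cbNorm (fun a => ι a) (fun a => ι a) Φ)) ∧
    (IsCompletelyPositive Φ →
      IsHerzSchurMultiplierCP ι α
        (fun s : G => ∑ p ∈ Fs ∩ Fs.image (fun q => s * q),
          autLin (α p) ∘ₗ Φ ∘ₗ autLin (α p⁻¹))) := by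
  classical
  have hι : Function.Injective ι := (AddMonoidHomClass.isometry_of_norm ι hisom).injective
  obtain ⟨J, hJ'⟩ := (iotaLin ι).exists_leftInverse_of_injective (LinearMap.ker_eq_bot.2 hι)
  have hJ : ∀ a, J (ι a) = a := fun a => LinearMap.congr_fun hJ' a
  have hne : {C : ℝ | 0 ≤ C ∧ CBBound (fun a => ι a) (fun a => ι a) Φ C}.Nonempty := hΦcb
  have hcl : IsClosed {C : ℝ | 0 ≤ C ∧ CBBound (fun a => ι a) (fun a => ι a) Φ C} := by
    simp only [CBBound, Set.ofPred_and, Set.ofPred_forall]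
    refine IsClosed.inter (isClosed_le continuous_const continuous_id) ?_
    refine isClosed_iInter fun n => isClosed_iInter fun M => ?_
    exact isClosed_le continuous_const (by fun_prop)
  have hmem := hcl.csInf_mem hne ⟨0, fun C hC => hC.1⟩
  have hb := HFAux.PsiMap_cb ι hisom α Fs Φ J hJ _ hmem.1 hmem.2
  have hg := HFAux.PsiMap_gen ι α hα Fs Φ J hJ
  refine ⟨⟨HFAux.PsiMap ι α Fs Φ J, hg, fun x _ => HFAux.PsiMap_mem ι α hα Fs Φ J x, hb⟩, ?_⟩
  intro hcp
  exact ⟨HFAux.PsiMap ι α Fs Φ J, hg, HFAux.PsiMap_cp ι hisom α hα Fs Φ J hJ hcp, _,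
    mul_nonneg (Nat.cast_nonneg _) hmem.1, hb⟩

end
end

section
/- Let (A,G,α) be a C*-dynamical system with G discrete, A unital with faithful tracial state τ and τ-preserving action α. If F : G → CB(A) is a completely positive Herz-Schur (A,G,α)-multiplier such that τ∘F(e) ≤ τ and F(e)(1_A) = 1_A, then for each t ∈ G the map F(t) is L²-bounded and the induced operator T_{F(t)} on L²(A,τ) is a contraction. -/
section HSAux
open scoped ComplexOrder ENNReal
open Matrix

variable {H : Type*} [NormedAddCommGroup H] [InnerProductSpace ℂ H] [CompleteSpace H]

theorem hsaux_reflect {A : Type*} [CStarAlgebra A]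
    (ι : A →⋆ₙₐ[ℂ] (H →L[ℂ] H)) (hisom : ∀ a : A, ‖ι a‖ = ‖a‖) (hι1 : ι 1 = 1)
    (c : A) (hc : (ι c).IsPositive) : ∃ d : A, c = star d * d := by
  letI : PartialOrder A := CStarAlgebra.spectralOrder A
  haveI : StarOrderedRing A := CStarAlgebra.spectralOrderedRing A
  have hinj : Function.Injective ι := by
    intro a b hab
    rw [← sub_eq_zero, ← norm_eq_zero, ← hisom, map_sub, hab, sub_self, norm_zero]
  let φ : A →⋆ₐ[ℂ] (H →L[ℂ] H) :=
    { toFun := ι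
      map_one' := hι1
      map_mul' := map_mul ι
      map_zero' := map_zero ι
      map_add' := map_add ι
      map_star' := map_star ι
      commutes' := fun r => by
        rw [Algebra.algebraMap_eq_smul_one, map_smul, hι1, Algebra.algebraMap_eq_smul_one] }
  have hcs : IsSelfAdjoint c := by
    apply hinj
    rw [map_star]
    exact hc.isSelfAdjoint
  have hsp : spectrum ℝ (ι c) = spectrum ℝ c := hcs.map_spectrum_real φ hinj
  have hn : 0 ≤ ι c := (ContinuousLinearMap.nonneg_iff_isPositive _).2 hc
  have : 0 ≤ c := by
    rw [StarOrderedRing.nonneg_iff_spectrum_nonneg (R := ℝ) c]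
    rw [← hsp]
    exact (StarOrderedRing.nonneg_iff_spectrum_nonneg (R := ℝ) (ι c)).1 hn
  exact CStarAlgebra.nonneg_iff_eq_star_mul_self.1 this

variable {A : Type*} [CStarAlgebra A] {G : Type*} [Group G]

theorem hsaux_pi_apply (ι : A →⋆ₙₐ[ℂ] (H →L[ℂ] H)) (α : G → A ≃⋆ₐ[ℂ] A) (a : A)
    (f : lp (fun _ : G => H) 2) (s : G) : (piRep ι α a f : ∀ _ : G, H) s = ι (α s⁻¹ a) (f s) := rfl

theorem hsaux_lam_apply (t : G) (f : lp (fun _ : G => H) 2) (s : G) :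
    (lam t f : ∀ _ : G, H) s = f (t⁻¹ * s) := rfl

theorem hsaux_star_pi (ι : A →⋆ₙₐ[ℂ] (H →L[ℂ] H)) (α : G → A ≃⋆ₐ[ℂ] A) (a : A) :
    star (piRep ι α a) = piRep ι α (star a) := by
  rw [ContinuousLinearMap.star_eq_adjoint]
  symm
  rw [ContinuousLinearMap.eq_adjoint_iff]
  intro f g
  rw [lp.inner_eq_tsum, lp.inner_eq_tsum]
  congr 1
  funext s
  rw [hsaux_pi_apply, hsaux_pi_apply, map_star, map_star, ContinuousLinearMap.star_eq_adjoint,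
    ContinuousLinearMap.adjoint_inner_left]

theorem hsaux_star_lam (t : G) :
    star (lam (H := H) t) = lam t⁻¹ := by
  rw [ContinuousLinearMap.star_eq_adjoint]
  symm
  rw [ContinuousLinearMap.eq_adjoint_iff]
  intro f g
  rw [lp.inner_eq_tsum, lp.inner_eq_tsum, ← (Equiv.mulLeft t).tsum_eq (fun s => inner ℂ (f s) _)]
  congr 1
  funext s
  simp [hsaux_lam_apply]

theorem hsaux_pi_mul (ι : A →⋆ₙₐ[ℂ] (H →L[ℂ] H)) (α : G → A ≃⋆ₐ[ℂ] A) (a b : A) :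
    piRep ι α a * piRep ι α b = piRep ι α (a * b) := by
  ext f s
  simp [hsaux_pi_apply]

theorem hsaux_lam_mul (s t : G) : lam (H := H) s * lam t = lam (s * t) := by
  ext f u
  simp [hsaux_lam_apply, mul_assoc]

theorem hsaux_lam_one : lam (H := H) (1 : G) = 1 := by
  ext f u
  simp [hsaux_lam_apply]

theorem hsaux_pi_one (ι : A →⋆ₙₐ[ℂ] (H →L[ℂ] H)) (hι1 : ι 1 = 1) (α : G → A ≃⋆ₐ[ℂ] A) :
    piRep ι α 1 = 1 := by
  ext f u
  simp [hsaux_pi_apply, hι1]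

theorem hsaux_cov (ι : A →⋆ₙₐ[ℂ] (H →L[ℂ] H)) (α : G → A ≃⋆ₐ[ℂ] A) (hα : IsAction α)
    (t : G) (a : A) : lam t * piRep ι α a = piRep ι α (α t a) * lam t := by
  ext f u
  simp [hsaux_pi_apply, hsaux_lam_apply, hα.2]

theorem hsaux_star_x (ι : A →⋆ₙₐ[ℂ] (H →L[ℂ] H)) (α : G → A ≃⋆ₐ[ℂ] A) (hα : IsAction α)
    (t : G) (a : A) : star (piRep ι α a * lam t) = piRep ι α (α t⁻¹ (star a)) * lam t⁻¹ := by
  rw [star_mul, hsaux_star_pi, hsaux_star_lam, hsaux_cov ι α hα]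

theorem hsaux_star_xx (ι : A →⋆ₙₐ[ℂ] (H →L[ℂ] H)) (α : G → A ≃⋆ₐ[ℂ] A) (hα : IsAction α)
    (t : G) (a : A) : star (piRep ι α a * lam t) * (piRep ι α a * lam t)
      = piRep ι α (α t⁻¹ (star a * a)) := by
  rw [hsaux_star_x ι α hα, mul_assoc, ← mul_assoc (lam t⁻¹), hsaux_cov ι α hα, mul_assoc,
    hsaux_lam_mul, inv_mul_cancel, hsaux_lam_one, mul_one, hsaux_pi_mul, map_mul]

theorem hsaux_schur {R : Type*} [Ring R] [StarRing R] (y z w : R)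
    (h : MatPos !![1, y; z, w]) : ∃ p q : R, w - star y * y = star p * p + star q * q := by
  obtain ⟨N, hN⟩ := h
  have h00 := congrFun (congrFun hN 0) 0
  have h01 := congrFun (congrFun hN 0) 1
  have h11 := congrFun (congrFun hN 1) 1
  simp [Matrix.mul_apply, Fin.sum_univ_two] at h00 h01 h11
  have h01' := congrArg star h01
  simp only [star_add, star_mul, star_star] at h01'
  refine ⟨N 0 1 - N 0 0 * y, N 1 1 - N 1 0 * y, ?_⟩
  simp only [star_sub, star_mul]
  have e : (star (N 0 1) - star y * star (N 0 0)) * (N 0 1 - N 0 0 * y)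
      + (star (N 1 1) - star y * star (N 1 0)) * (N 1 1 - N 1 0 * y)
      = (star (N 0 1) * N 0 1 + star (N 1 1) * N 1 1)
        - (star (N 0 1) * N 0 0 + star (N 1 1) * N 1 0) * y
        - star y * (star (N 0 0) * N 0 1 + star (N 1 0) * N 1 1)
        + star y * (star (N 0 0) * N 0 0 + star (N 1 0) * N 1 0) * y := by
    noncomm_ring
  rw [e, ← h00, ← h01, ← h01', ← h11]
  noncomm_ring

theorem hsaux_pos (ι : A →⋆ₙₐ[ℂ] (H →L[ℂ] H)) (α : G → A ≃⋆ₐ[ℂ] A) (hα : IsAction α) (c : A)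
    (h : (piRep ι α c).IsPositive) : (ι c).IsPositive := by
  classical
  rw [ContinuousLinearMap.isPositive_iff_complex] at h ⊢
  intro ξ
  have := h (lp.single 2 1 ξ)
  rw [lp.inner_single_right, hsaux_pi_apply, inv_one, hα.1, lp.single_apply_self] at this
  exact this

theorem hsaux_main
    (ι : A →⋆ₙₐ[ℂ] (H →L[ℂ] H)) (hisom : ∀ a : A, ‖ι a‖ = ‖a‖) (hι1 : ι 1 = 1)
    (α : G → A ≃⋆ₐ[ℂ] A) (hα : IsAction α) (F : G → (A →ₗ[ℂ] A))
    (hF : IsHerzSchurMultiplierCP ι α F) (hFe : F 1 1 = 1) (t : G) (a : A) :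
    ∃ d : A, F 1 (α t⁻¹ (star a * a)) - α t⁻¹ (star (F t a) * F t a) = star d * d := by
  obtain ⟨Φ, hΦ, ⟨-, hcp⟩, -⟩ := hF
  have hmem : ∀ (b : A) (s : G), piRep ι α b * lam s ∈ CrossedSet ι α := fun b s =>
    subset_closure (Submodule.subset_span ⟨b, s, rfl⟩)
  have h1 : (1 : lp (fun _ : G => H) 2 →L[ℂ] lp (fun _ : G => H) 2)
      = piRep ι α 1 * lam 1 := by rw [hsaux_pi_one ι hι1, hsaux_lam_one, one_mul]
  set x := piRep ι α a * lam t with hx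
  have hxx : star x * x = piRep ι α (α t⁻¹ (star a * a)) * lam 1 := by
    rw [hx, hsaux_star_xx ι α hα, hsaux_lam_one, mul_one]
  have hM := hcp 2 !![1, x; star x, star x * x] (by
      intro i j
      fin_cases i <;> fin_cases j
      · simpa [← h1] using hmem 1 1
      · exact hmem a t
      · show star x ∈ _
        rw [hx, hsaux_star_x ι α hα]; exact hmem _ _
      · show star x * x ∈ _
        rw [hxx]; exact hmem _ _) ⟨!![1, x; 0, 0], by
      ext1 i j
      fin_cases i <;> fin_cases j <;> simp [Matrix.mul_apply]⟩
  have hM2 : (!![1, x; star x, star x * x]).map Φ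
      = !![1, Φ x; Φ (star x), Φ (star x * x)] := by
    have : Φ 1 = 1 := by rw [h1, hΦ, hFe]
    ext1 i j
    fin_cases i <;> fin_cases j <;> simp [this]
  rw [hM2] at hM
  obtain ⟨p, q, hpq⟩ := hsaux_schur _ _ _ hM
  rw [hxx, hΦ, hx, hΦ, hsaux_star_xx ι α hα, hsaux_lam_one, mul_one] at hpq
  have hsub : piRep ι α (F 1 (α t⁻¹ (star a * a)) - α t⁻¹ (star (F t a) * F t a))
      = star p * p + star q * q := by
    rw [← hpq]
    exact map_sub (piRepLin ι α) _ _
  apply hsaux_reflect ι hisom hι1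
  apply hsaux_pos ι α hα
  rw [hsub, ← ContinuousLinearMap.nonneg_iff_isPositive]
  exact add_nonneg (star_mul_self_nonneg p) (star_mul_self_nonneg q)

end HSAux

noncomputable section
open scoped ComplexOrder ENNReal
open Matrix

/-- **Lemma 3.2.** Let `(A,G,α)` be a C*-dynamical system with `A` unital carrying a
faithful tracial state `τ` preserved by `α`.  If `F : G → CB(A)` is a completely
positive Herz-Schur `(A,G,α)`-multiplier with `τ ∘ F(e) ≤ τ` and `F(e)(1) = 1`, then
for every `t ∈ G` the map `F(t)` is `L²`-bounded and the induced operator `T_{F(t)}`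
on `L²(A,τ)` is a contraction. -/
theorem herzSchurCP_L2_contraction
    {H : Type*} [NormedAddCommGroup H] [InnerProductSpace ℂ H] [CompleteSpace H]
    {A : Type*} [CStarAlgebra A] {G : Type*} [Group G]
    (ι : A →⋆ₙₐ[ℂ] (H →L[ℂ] H)) (hisom : ∀ a : A, ‖ι a‖ = ‖a‖)
    (hnd : NondegenerateRep ι) (hι1 : ι 1 = 1)
    (α : G → A ≃⋆ₐ[ℂ] A) (hα : IsAction α)
    (τ : A →ₗ[ℂ] ℂ) (hτpos : IsPositiveFunctional τ) (hτtr : IsTracial τ)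
    (hτf : IsFaithfulFunctional τ) (hτ1 : τ 1 = 1)
    (hτα : ∀ (t : G) (a : A), τ (α t a) = τ a)
    (F : G → (A →ₗ[ℂ] A))
    (hF : IsHerzSchurMultiplierCP ι α F)
    (hτF : ∀ a : A, τ (F 1 (star a * a)) ≤ τ (star a * a))
    (hFe : F 1 1 = 1) :
    ∀ t : G, L2Bounded τ (F t) ∧ L2BoundedBy τ (F t) 1 := by
  have key : ∀ t : G, L2BoundedBy τ (F t) 1 := by
    intro t a
    obtain ⟨d, hd⟩ := hsaux_main ι hisom hι1 α hα F hF hFe t a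
    have h1 := hτpos d
    rw [← hd, map_sub, hτα, sub_nonneg] at h1
    have h2 := hτF (α t⁻¹ a)
    rw [← map_star, ← map_mul, hτα] at h2
    rw [one_mul]
    exact Real.sqrt_le_sqrt (Complex.le_def.1 (h1.trans h2)).1
  exact fun t => ⟨⟨1, zero_le_one, key t⟩, key t⟩

end
end
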